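/- Let i, j ≥ 1 be integers with i + j odd and i < j. Then every complex root of the polynomial Z_i·Z_j + 1 is real if and only if i = j − 1. Moreover, when i = j − 1: (Z_i·Z_j + 1) composed with X² equals P_{i+j}² as real polynomials (i.e. Z_i(x²)·Z_j(x²) + 1 = P_{i+j}(x)² for all x), and Z_i·Z_j + 1 factors completely over ℝ as Π_{k=1}^{2j−1} (X − 4·cos²(πk/(2j))). -/

import Mathlib

open Polynomial Real

/-- The polynomial sequence `Z`: `Z 0 = 1`, `Z 1 = X - 1`,
`Z n = (X - 2) * Z (n-1) - Z (n-2)` for `n ≥ 2`. -/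
noncomputable def Z : ℕ → Polynomial ℝ
  | 0 => 1
  | 1 => X - 1
  | n + 2 => (X - 2) * Z (n + 1) - Z n

/-- The Chebyshev polynomial of the second kind rescaled to `(-2, 2)`:
`P n (x) = U n (x / 2)`. -/
noncomputable def P (n : ℕ) : Polynomial ℝ :=
  (Polynomial.Chebyshev.U ℝ n).comp (Polynomial.C 2⁻¹ * X)

/-!
Substituting `X ^ 2` turns `Z n` into the Vieta–Fibonacci polynomial `S (2 n)`, and `P n` is `S n`.
For `j = i + 1` the Cassini identity `S (n) * S (n + 2) + 1 = S (n + 1) ^ 2` thus gives the square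
`P (i + j) ^ 2`, and the known roots of the Chebyshev polynomials give the factorization.

For `j ≥ i + 2` put `x = 4 sin² ε` and `N = i + j + 1`, and let `r ∈ {1, 2}` have the parity of `N`.
Then `Z i * Z j + 1` takes at `x` the value
`(sin² (N ε - r π / 2) + sin² ((j - i) ε - r π / 2) - sin² ε) / cos² ε`.
When `N ε - r π / 2` runs from `-π / 2` through `0` to `π / 2`, this is positive in between, at
least `1` at the two ends and at most `1` in the middle. A real-rooted polynomial has no such
valley, as the logarithm of its absolute value is strictly concave between consecutive roots.
-/

section RealRooted

theorem splits_iff_forall_aeval_eq_zero_im_eq_zero {f : ℝ[X]} (hf : f ≠ 0) :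
    f.Splits ↔ ∀ z : ℂ, aeval z f = 0 → z.im = 0 := by
  have mem_roots_map (z : ℂ) : z ∈ (f.map (algebraMap ℝ ℂ)).roots ↔ aeval z f = 0 := by
    rw [mem_roots_map hf, aeval_def]
  refine ⟨fun hsplits z hz ↦ ?_, fun him ↦ ?_⟩
  · rw [← mem_roots_map, hsplits.roots_map, Multiset.mem_map] at hz
    obtain ⟨r, -, rfl⟩ := hz
    exact Complex.ofReal_im r
  · refine Splits.of_splits_map (algebraMap ℝ ℂ) (IsAlgClosed.splits _) fun z hz ↦ ?_
    exact ⟨z.re, Complex.ext rfl (him z ((mem_roots_map z).1 hz)).symm⟩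

theorem natDegree_ne_zero_of_eval_ne {R : Type*} [Semiring R] {f : R[X]} {x y : R}
    (h : f.eval x ≠ f.eval y) : f.natDegree ≠ 0 := fun hdeg ↦ by
  obtain ⟨a, rfl⟩ := natDegree_eq_zero.1 hdeg
  exact h (by rw [eval_C, eval_C])

theorem strictConcaveOn_log_sub {s : Set ℝ} (hs : Convex ℝ s) {r : ℝ} (hr : r ∉ s) :
    StrictConcaveOn ℝ s (fun x ↦ log (x - r)) := by
  have hside : (∀ x ∈ s, r < x) ∨ ∀ x ∈ s, x < r := by
    by_contra! ⟨⟨x, hx, hxr⟩, ⟨y, hy, hry⟩⟩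
    exact hr (hs.ordConnected.out hx hy ⟨hxr, hry⟩)
  simp only [sub_eq_add_neg]
  rcases hside with h | h
  · exact (strictConcaveOn_log_Ioi.translate_left (-r)).subset
      (fun x hx ↦ by simpa using h x hx) hs
  · exact (strictConcaveOn_log_Iio.translate_left (-r)).subset
      (fun x hx ↦ by simpa using h x hx) hs

theorem strictConcaveOn_log_eval_of_splits {f : ℝ[X]} (hf : f.Splits) (hdeg : f.natDegree ≠ 0)
    {s : Set ℝ} (hs : Convex ℝ s) (hroot : ∀ x ∈ s, f.eval x ≠ 0) :
    StrictConcaveOn ℝ s (fun x ↦ log (f.eval x)) := by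
  have hf0 : f ≠ 0 := ne_zero_of_natDegree_gt (Nat.pos_of_ne_zero hdeg)
  have hlead : f.leadingCoeff ≠ 0 := leadingCoeff_ne_zero.2 hf0
  have hnotMem : ∀ r ∈ f.roots, r ∉ s := fun r hr hrs ↦ hroot r hrs (isRoot_of_mem_roots hr)
  have hsum : StrictConcaveOn ℝ s (f.roots.map fun r x ↦ log (x - r)).sum := by
    refine Multiset.sum_induction_nonempty (StrictConcaveOn ℝ s) (fun _ _ h₁ h₂ ↦ h₁.add h₂) ?_ ?_
    · simpa using hf.roots_ne_zero hdeg
    · simp only [Multiset.mem_map, forall_exists_index, and_imp, forall_apply_eq_imp_iff₂]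
      exact fun r hr ↦ strictConcaveOn_log_sub hs (hnotMem r hr)
  refine (hsum.add_const (log f.leadingCoeff)).congr fun x hx ↦ ?_
  have hne : ∀ y ∈ f.roots.map (x - ·), y ≠ 0 := by
    simp only [Multiset.mem_map, forall_exists_index, and_imp, forall_apply_eq_imp_iff₂]
    exact fun r hr ↦ sub_ne_zero.2 fun hxr ↦ hnotMem r hr (hxr ▸ hx)
  have hsum_apply : (f.roots.map fun r x ↦ log (x - r)).sum x
      = (f.roots.map fun r ↦ log (x - r)).sum := by
    simpa using map_multiset_sum (Pi.evalAddMonoidHom (fun _ : ℝ ↦ ℝ) x)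
      (f.roots.map fun r x ↦ log (x - r))
  rw [hf.eval_eq_prod_roots x, log_mul hlead (Multiset.prod_ne_zero fun h ↦ hne 0 h rfl),
    log_multiset_prod hne, Multiset.map_map, add_comm]
  exact congrArg (log f.leadingCoeff + ·) hsum_apply

theorem min_eval_lt_eval_of_splits {f : ℝ[X]} (hf : f.Splits) (hdeg : f.natDegree ≠ 0)
    {a b c : ℝ} (hab : a < b) (hbc : b < c) (hpos : ∀ x ∈ Set.Icc a c, 0 < f.eval x) :
    min (f.eval a) (f.eval c) < f.eval b := by
  have hac := hab.trans hbc
  have ha : a ∈ Set.Icc a c := Set.left_mem_Icc.2 hac.le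
  have hc : c ∈ Set.Icc a c := Set.right_mem_Icc.2 hac.le
  have hb : b ∈ Set.Icc a c := ⟨hab.le, hbc.le⟩
  have hlog := (strictConcaveOn_log_eval_of_splits hf hdeg (convex_Icc a c)
    fun x hx ↦ (hpos x hx).ne').lt_on_openSegment ha hc hac.ne
    (by rw [openSegment_eq_Ioo hac]; exact ⟨hab, hbc⟩)
  rw [min_lt_iff] at hlog ⊢
  exact hlog.imp (log_lt_log_iff (hpos a ha) (hpos b hb)).1
    (log_lt_log_iff (hpos c hc) (hpos b hb)).1

end RealRooted

section VietaFibonacci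

theorem chebyshev_S_mul_S_add_two_add_one (R : Type*) [CommRing R] (n : ℤ) :
    Chebyshev.S R n * Chebyshev.S R (n + 2) + 1 = Chebyshev.S R (n + 1) ^ 2 := by
  linear_combination Chebyshev.S R n * Chebyshev.S_add_two R n - Chebyshev.S_sq_add_S_sq R n

theorem P_eq_chebyshev_S (n : ℕ) : P n = Chebyshev.S ℝ n := by
  rw [P, Chebyshev.S_eq_U_comp_half_mul_X, invOf_eq_inv]

theorem Z_comp_X_sq (n : ℕ) : (Z n).comp (X ^ 2) = Chebyshev.S ℝ (2 * n) := by
  induction n using Nat.twoStepInduction with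
  | zero => simp [Z]
  | one => simp [Z, Chebyshev.S_two]
  | more n ih₀ ih₁ =>
    have h₂ := Chebyshev.S_add_two ℝ (2 * n)
    have h₃ := Chebyshev.S_add_two ℝ (2 * n + 1)
    have h₄ := Chebyshev.S_add_two ℝ (2 * n + 2)
    push_cast at ih₁ ⊢
    simp only [Z, sub_comp, mul_comp, X_comp, ofNat_comp, ih₀, ih₁]
    ring_nf at h₂ h₃ h₄ ⊢
    linear_combination -h₂ - X * h₃ - h₄

theorem Z_mul_Z_succ_add_one_comp_X_sq (i : ℕ) :
    (Z i * Z (i + 1) + 1).comp (X ^ 2) = P (i + (i + 1)) ^ 2 := by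
  have cassini := chebyshev_S_mul_S_add_two_add_one ℝ (2 * i)
  rw [P_eq_chebyshev_S, add_comp, mul_comp, one_comp, Z_comp_X_sq, Z_comp_X_sq]
  push_cast
  rw [mul_add_one (2 : ℤ), cassini, ← add_assoc, ← two_mul]

theorem chebyshev_U_eq_prod (n : ℕ) :
    Chebyshev.U ℝ n = C (2 ^ n) * ∏ k ∈ Finset.range n, (X - C (cos ((k + 1) * π / (n + 1)))) := by
  have hinj := (Finset.range n).nodup_map_iff_injOn.1 (Chebyshev.roots_U_real_nodup n)
  have hroots := Chebyshev.roots_U_real n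
  have hsplits : (Chebyshev.U ℝ n).Splits := by
    rw [splits_iff_card_roots, hroots, Finset.card_val, Finset.card_image_of_injOn hinj,
      Finset.card_range, Chebyshev.natDegree_U_natCast]
  rw [hsplits.eq_prod_roots, Chebyshev.leadingCoeff_U_natCast, hroots]
  exact congrArg _ (Finset.prod_image hinj)

theorem P_eq_prod (n : ℕ) :
    P n = ∏ k ∈ Finset.Icc 1 n, (X - C (2 * cos (π * k / (n + 1)))) := by
  have hpow : (C (2 ^ n) : ℝ[X]) = ∏ _k ∈ Finset.range n, C 2 := by simp
  have hfactor (k : ℕ) : (C 2 * (X - C (cos ((k + 1) * π / (n + 1))))).comp (C 2⁻¹ * X)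
      = X - C (2 * cos (π * (k + 1 : ℕ) / (n + 1))) := by
    have hC : (C 2 * C 2⁻¹ : ℝ[X]) = 1 := by rw [← C_mul, mul_inv_cancel₀ two_ne_zero, C_1]
    simp only [mul_comp, sub_comp, C_comp, X_comp, C_mul, Nat.cast_succ, mul_comm π]
    linear_combination X * hC
  rw [P, chebyshev_U_eq_prod, hpow, ← Finset.prod_mul_distrib, prod_comp]
  simp only [hfactor]
  rw [Finset.range_eq_Ico,
    Finset.prod_Ico_add' (fun k : ℕ ↦ X - C (2 * cos (π * k / (n + 1)))) 0 n 1]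
  rfl

theorem P_comp_neg_X (n : ℕ) : (P n).comp (-X) = (-1) ^ n * P n := by
  refine funext fun x ↦ ?_
  have h := Chebyshev.U_eval_neg ℝ n (2⁻¹ * x)
  simp [P, h, Int.negOnePow]

theorem P_sq_eq_prod_comp_X_sq (n : ℕ) :
    P n ^ 2 = (∏ k ∈ Finset.Icc 1 n, (X - C (4 * cos (π * k / (n + 1)) ^ 2))).comp (X ^ 2) := by
  have hreflect : P n = ∏ k ∈ Finset.Icc 1 n, (X + C (2 * cos (π * k / (n + 1)))) := by
    have hneg : P n = (-1) ^ n * (P n).comp (-X) := by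
      rw [P_comp_neg_X, ← mul_assoc, ← mul_pow, neg_one_mul, neg_neg, one_pow, one_mul]
    have hsign : (-1 : ℝ[X]) ^ n = ∏ _k ∈ Finset.Icc 1 n, -1 := by simp
    rw [hneg, P_eq_prod, prod_comp, hsign, ← Finset.prod_mul_distrib]
    refine Finset.prod_congr rfl fun k _ ↦ ?_
    simp only [sub_comp, X_comp, C_comp]
    ring
  rw [sq]
  nth_rw 1 [P_eq_prod]
  rw [hreflect, ← Finset.prod_mul_distrib, prod_comp]
  refine Finset.prod_congr rfl fun k _ ↦ ?_
  rw [sub_comp, X_comp, C_comp]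
  simp only [C_mul, C_pow, map_ofNat]
  ring

theorem Z_mul_Z_succ_add_one_eq_prod (i : ℕ) :
    Z i * Z (i + 1) + 1 = ∏ k ∈ Finset.Icc 1 (2 * i + 1),
      (X - C (4 * cos (π * k / (2 * (i + 1))) ^ 2)) := by
  refine expand_injective (R := ℝ) two_pos ?_
  have hprod := P_sq_eq_prod_comp_X_sq (2 * i + 1)
  have hden : (((2 * i + 1 : ℕ) : ℝ) + 1) = 2 * (i + 1) := by push_cast; ring
  rw [expand_eq_comp_X_pow, expand_eq_comp_X_pow, Z_mul_Z_succ_add_one_comp_X_sq, ← add_assoc,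
    ← two_mul, hprod, hden]

theorem Z_eval_four (n : ℕ) : (Z n).eval 4 = 2 * n + 1 := by
  have h := congrArg (eval 2) (Z_comp_X_sq n)
  rw [eval_comp, eval_pow, eval_X, Chebyshev.S_eval_two] at h
  convert h using 1 <;> norm_num

theorem one_lt_Z_mul_Z_add_one_eval_four (i j : ℕ) : 1 < (Z i * Z j + 1).eval 4 := by
  rw [eval_add, eval_mul, Z_eval_four, Z_eval_four, eval_one]
  exact lt_add_of_pos_left 1 (by positivity)

theorem Z_mul_Z_add_one_ne_zero (i j : ℕ) : Z i * Z j + 1 ≠ 0 := by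
  intro h
  have hlt := one_lt_Z_mul_Z_add_one_eval_four i j
  rw [h, eval_zero] at hlt
  exact hlt.not_gt one_pos

theorem Z_eval_four_mul_cos_sq (n : ℕ) (θ : ℝ) :
    (Z n).eval (4 * cos θ ^ 2) * sin θ = sin ((2 * n + 1) * θ) := by
  have h := Chebyshev.S_two_mul_real_cos θ (2 * n)
  rw [← Z_comp_X_sq, eval_comp, eval_pow, eval_X, mul_pow] at h
  convert h using 1 <;> norm_num

end VietaFibonacci

section Valley

theorem sin_sq_lt_sin_sq {x y : ℝ} (hxy : |x| < |y|) (hsum : |x| + |y| < π) :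
    sin x ^ 2 < sin y ^ 2 := by
  have hx := abs_nonneg x
  have hadd : 0 < sin (|y| + |x|) := sin_pos_of_pos_of_lt_pi (by linarith) (by linarith)
  have hsub : 0 < sin (|y| - |x|) := sin_pos_of_pos_of_lt_pi (by linarith) (by linarith)
  have hprod : sin (|y| + |x|) * sin (|y| - |x|) = sin |y| ^ 2 - sin |x| ^ 2 := by
    rw [sin_add, sin_sub]
    linear_combination sin |y| ^ 2 * sin_sq_add_cos_sq |x| - sin |x| ^ 2 * sin_sq_add_cos_sq |y|
  have sin_abs_sq (u : ℝ) : sin |u| ^ 2 = sin u ^ 2 := by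
    rcases abs_choice u with h | h <;> simp [h]
  rw [← sin_abs_sq x, ← sin_abs_sq y, ← sub_pos, ← hprod]
  exact mul_pos hadd hsub

theorem not_splits_of_valley_four_mul_sin_sq {f : ℝ[X]} (hdeg : f.natDegree ≠ 0) {a b c : ℝ}
    (ha : 0 ≤ a) (hab : a < b) (hbc : b < c) (hc : c < π / 2)
    (hfa : 1 ≤ f.eval (4 * sin a ^ 2)) (hfb : f.eval (4 * sin b ^ 2) ≤ 1)
    (hfc : 1 ≤ f.eval (4 * sin c ^ 2))
    (hpos : ∀ ε ∈ Set.Ioo a c, 0 < f.eval (4 * sin ε ^ 2)) : ¬f.Splits := by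
  have hmono {u v : ℝ} (hu : 0 ≤ u) (huv : u < v) (hv : v ≤ c) : 4 * sin u ^ 2 < 4 * sin v ^ 2 := by
    have hsin : sin u ^ 2 < sin v ^ 2 := by
      apply sin_sq_lt_sin_sq <;> rw [abs_of_nonneg hu, abs_of_pos (hu.trans_lt huv)] <;> linarith
    linarith
  have hpos_Icc : ∀ x ∈ Set.Icc (4 * sin a ^ 2) (4 * sin c ^ 2), 0 < f.eval x := by
    intro x hx
    rcases Set.eq_endpoints_or_mem_Ioo_of_mem_Icc hx with rfl | rfl | hx
    · exact one_pos.trans_le hfa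
    · exact one_pos.trans_le hfc
    · obtain ⟨ε, hε, rfl⟩ := intermediate_value_Ioo (f := fun ε ↦ 4 * sin ε ^ 2)
        (hab.trans hbc).le (by fun_prop) hx
      exact hpos ε hε
  intro hsplits
  have hlt := min_eval_lt_eval_of_splits hsplits hdeg (hmono ha hab hbc.le)
    (hmono (ha.trans hab.le) hbc le_rfl) hpos_Icc
  exact (hfb.trans (le_min hfa hfc)).not_gt hlt

theorem sin_sq_lt_sin_sq_add_sin_sq {ε φ ψ : ℝ} (hε : 0 < ε) (hφ : ε - π < φ)
    (hφψ : φ + 2 * ε < ψ) (hψ : ψ ≤ π / 2) : sin ε ^ 2 < sin φ ^ 2 + sin ψ ^ 2 := by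
  rcases lt_or_ge φ (-ε) with h | h
  · have hφε : sin ε ^ 2 < sin φ ^ 2 := by
      apply sin_sq_lt_sin_sq <;> rw [abs_of_pos hε, abs_of_neg (by linarith)] <;> linarith
    linarith [sq_nonneg (sin ψ)]
  · have hψε : sin ε ^ 2 < sin ψ ^ 2 := by
      apply sin_sq_lt_sin_sq <;> rw [abs_of_pos hε, abs_of_pos (by linarith)] <;> linarith
    linarith [sq_nonneg (sin φ)]

theorem sin_sq_int_mul_pi_sub (n : ℤ) (x : ℝ) : sin (n * π - x) ^ 2 = sin x ^ 2 := by
  rw [sin_int_mul_pi_sub, neg_sq, mul_pow, ← zpow_natCast, zpow_comm, zpow_natCast,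
    neg_one_sq, one_zpow, one_mul]

theorem Z_mul_Z_add_one_eval_four_mul_cos_sq (i j : ℕ) (θ : ℝ) :
    (Z i * Z j + 1).eval (4 * cos θ ^ 2) * sin θ ^ 2
      = sin ((i + j + 1) * θ) ^ 2 - sin ((j - i) * θ) ^ 2 + sin θ ^ 2 := by
  set A := (i + j + 1) * θ with hA
  set B := (j - i) * θ with hB
  have hi := Z_eval_four_mul_cos_sq i θ
  have hj := Z_eval_four_mul_cos_sq j θ
  rw [show (2 * i + 1) * θ = A - B by rw [hA, hB]; ring, sin_sub] at hi
  rw [show (2 * j + 1) * θ = A + B by rw [hA, hB]; ring, sin_add] at hj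
  rw [eval_add, eval_mul, eval_one]
  linear_combination (eval (4 * cos θ ^ 2) (Z j) * sin θ) * hi
    + (sin A * cos B - cos A * sin B) * hj
    + sin A ^ 2 * sin_sq_add_cos_sq B - sin B ^ 2 * sin_sq_add_cos_sq A

variable {i j r m : ℕ} (hN : i + j + 1 = r + 2 * m)
include hN

theorem Z_mul_Z_add_one_eval_four_mul_sin_sq (ε : ℝ) :
    (Z i * Z j + 1).eval (4 * sin ε ^ 2) * cos ε ^ 2
      = sin ((i + j + 1) * ε - r * π / 2) ^ 2 + sin ((j - i) * ε - r * π / 2) ^ 2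
        - sin ε ^ 2 := by
  have hNR : (i + j + 1 : ℝ) = r + 2 * m := by exact_mod_cast hN
  have h := Z_mul_Z_add_one_eval_four_mul_cos_sq i j (π / 2 - ε)
  have hsum : (i + j + 1) * (π / 2 - ε) = (m : ℤ) * π - ((i + j + 1) * ε - r * π / 2) := by
    push_cast
    linear_combination π / 2 * hNR
  have hdiff : (j - i) * (π / 2 - ε)
      = (m - i : ℤ) * π - ((j - i) * ε - r * π / 2 + π / 2) := by
    push_cast
    linear_combination π / 2 * hNR
  rw [hsum, hdiff, sin_sq_int_mul_pi_sub, sin_sq_int_mul_pi_sub, sin_add_pi_div_two,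
    cos_pi_div_two_sub, sin_pi_div_two_sub] at h
  linear_combination h - sin_sq_add_cos_sq ((j - i) * ε - r * π / 2) + sin_sq_add_cos_sq ε

theorem Z_mul_Z_add_one_eval_le_one {ε : ℝ} (hcos : cos ε ≠ 0)
    (hmid : (i + j + 1) * ε = r * π / 2) : (Z i * Z j + 1).eval (4 * sin ε ^ 2) ≤ 1 := by
  have h := Z_mul_Z_add_one_eval_four_mul_sin_sq hN ε
  rw [hmid, sub_self, sin_zero] at h
  have hle : (Z i * Z j + 1).eval (4 * sin ε ^ 2) * cos ε ^ 2 ≤ 1 * cos ε ^ 2 := by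
    linarith [sin_sq_add_cos_sq ε, sin_sq_le_one ((j - i) * ε - r * π / 2)]
  exact le_of_mul_le_mul_right hle (by positivity)

theorem one_le_Z_mul_Z_add_one_eval {ε : ℝ} (hcos : cos ε ≠ 0)
    (hend : sin ((i + j + 1) * ε - r * π / 2) ^ 2 = 1) :
    1 ≤ (Z i * Z j + 1).eval (4 * sin ε ^ 2) := by
  have h := Z_mul_Z_add_one_eval_four_mul_sin_sq hN ε
  rw [hend] at h
  have hle : 1 * cos ε ^ 2 ≤ (Z i * Z j + 1).eval (4 * sin ε ^ 2) * cos ε ^ 2 := by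
    linarith [sin_sq_add_cos_sq ε, sq_nonneg (sin ((j - i) * ε - r * π / 2))]
  exact le_of_mul_le_mul_right hle (by positivity)

theorem Z_mul_Z_add_one_eval_pos (hi : 1 ≤ i) (hij : i + 2 ≤ j) (hr : r ≤ 2) {ε : ℝ} (hε : 0 < ε)
    (hend : (i + j + 1) * ε ≤ (r + 1) * π / 2) :
    0 < (Z i * Z j + 1).eval (4 * sin ε ^ 2) := by
  have hiR : (1 : ℝ) ≤ i := by exact_mod_cast hi
  have hijR : (i + 2 : ℝ) ≤ j := by exact_mod_cast hij
  have hrR : (r : ℝ) ≤ 2 := by exact_mod_cast hr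
  have hval := Z_mul_Z_add_one_eval_four_mul_sin_sq hN ε
  have hsin := sin_sq_lt_sin_sq_add_sin_sq (φ := (j - i) * ε - r * π / 2)
    (ψ := (i + j + 1) * ε - r * π / 2) hε (by nlinarith [pi_pos]) (by nlinarith) (by linarith)
  exact pos_of_mul_pos_left (b := cos ε ^ 2) (by linarith) (sq_nonneg _)

end Valley

theorem not_splits_Z_mul_Z_add_one {i j : ℕ} (hi : 1 ≤ i) (hij : i + 2 ≤ j) :
    ¬(Z i * Z j + 1).Splits := by
  obtain ⟨r, m, hr₁, hr₂, hN⟩ : ∃ r m : ℕ, 1 ≤ r ∧ r ≤ 2 ∧ i + j + 1 = r + 2 * m :=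
    ⟨2 - (i + j + 1) % 2, (i + j) / 2, by omega, by omega, by omega⟩
  have hrR₁ : (1 : ℝ) ≤ r := by exact_mod_cast hr₁
  have hrR₂ : (r : ℝ) ≤ 2 := by exact_mod_cast hr₂
  have hN₅ : (5 : ℝ) ≤ i + j + 1 := by exact_mod_cast (by omega : 5 ≤ i + j + 1)
  obtain ⟨α, hα⟩ : ∃ α : ℝ, (i + j + 1) * α = π / 2 := ⟨π / 2 / (i + j + 1), by field_simp⟩
  have hα₀ : 0 < α := pos_of_mul_pos_right (hα ▸ pi_div_two_pos) (by linarith)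
  have hfirst : 0 ≤ (r - 1) * α := mul_nonneg (by linarith) hα₀.le
  have hlast : (r + 1) * α < π / 2 := hα ▸ mul_lt_mul_of_pos_right (by linarith) hα₀
  have hcos {ε : ℝ} (hε₀ : 0 ≤ ε) (hε : ε ≤ (r + 1) * α) : cos ε ≠ 0 :=
    (cos_pos_of_mem_Ioo ⟨by linarith [pi_pos], by linarith⟩).ne'
  have hvalley_le : (Z i * Z j + 1).eval (4 * sin (r * α) ^ 2) ≤ 1 :=
    Z_mul_Z_add_one_eval_le_one hN (hcos (by positivity) (by linarith))
      (by linear_combination r * hα)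
  refine not_splits_of_valley_four_mul_sin_sq
    (natDegree_ne_zero_of_eval_ne
      (hvalley_le.trans_lt (one_lt_Z_mul_Z_add_one_eval_four i j)).ne)
    (a := (r - 1) * α) (b := r * α) (c := (r + 1) * α)
    hfirst (by linarith) (by linarith) hlast ?_ hvalley_le ?_ fun ε hε ↦ ?_
  · refine one_le_Z_mul_Z_add_one_eval hN (hcos hfirst (by linarith)) ?_
    have harg : (i + j + 1) * ((r - 1) * α) - r * π / 2 = -(π / 2) := by
      linear_combination (r - 1) * hα
    rw [harg, sin_neg, sin_pi_div_two, neg_one_sq]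
  · refine one_le_Z_mul_Z_add_one_eval hN (hcos (by positivity) le_rfl) ?_
    have harg : (i + j + 1) * ((r + 1) * α) - r * π / 2 = π / 2 := by
      linear_combination (r + 1) * hα
    rw [harg, sin_pi_div_two, one_pow]
  · refine Z_mul_Z_add_one_eval_pos hN hi hij hr₂ (hfirst.trans_lt hε.1) ?_
    calc (i + j + 1) * ε ≤ (i + j + 1) * ((r + 1) * α) := by gcongr; exact hε.2.le
      _ = (r + 1) * π / 2 := by linear_combination (r + 1) * hα

theorem ZZ_add_one_real_roots_iff_general (i j : ℕ) (hi : 1 ≤ i) (hij : i < j) :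
    ((∀ z : ℂ, (Polynomial.aeval z) (Z i * Z j + 1) = 0 → z.im = 0) ↔ i = j - 1) ∧
    (i = j - 1 →
      (Z i * Z j + 1).comp (X ^ 2) = P (i + j) ^ 2 ∧
      Z i * Z j + 1 = ∏ k ∈ Finset.Icc 1 (2 * j - 1),
        (X - Polynomial.C (4 * Real.cos (π * k / (2 * j)) ^ 2))) := by
  rw [← splits_iff_forall_aeval_eq_zero_im_eq_zero (Z_mul_Z_add_one_ne_zero i j)]
  refine ⟨⟨fun hsplits ↦ ?_, fun h ↦ ?_⟩, fun h ↦ ?_⟩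
  · by_contra hne
    exact not_splits_Z_mul_Z_add_one hi (by omega) hsplits
  all_goals obtain rfl : j = i + 1 := by omega
  · rw [Z_mul_Z_succ_add_one_eq_prod]
    exact Splits.prod fun k _ ↦ Splits.X_sub_C _
  · rw [Nat.cast_succ]
    exact ⟨Z_mul_Z_succ_add_one_comp_X_sq i, Z_mul_Z_succ_add_one_eq_prod i⟩

theorem ZZ_add_one_real_roots_iff (i j : ℕ) (hi : 1 ≤ i) (hj : 1 ≤ j)
    (hpar : Odd (i + j)) (hij : i < j) :
    ((∀ z : ℂ, (Polynomial.aeval z) (Z i * Z j + 1) = 0 → z.im = 0) ↔ i = j - 1) ∧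
    (i = j - 1 →
      (Z i * Z j + 1).comp (X ^ 2) = P (i + j) ^ 2 ∧
      Z i * Z j + 1 = ∏ k ∈ Finset.Icc 1 (2 * j - 1),
        (X - Polynomial.C (4 * Real.cos (π * k / (2 * j)) ^ 2))) :=
  ZZ_add_one_real_roots_iff_general i j hi hij
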